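/- Fix ρ ∈ (0,1) and α ∈ (0,1). For each n ≥ 1 set α_n = α/n, let c_n be defined by Φ(−c_n) = α_n, and set FWER_n(ρ) = 1 − H_n(ρ, c_n). Then limsup_{n→∞} FWER_n(ρ) ≤ α·(1−ρ). -/

import Mathlib

open MeasureTheory Filter

/-- The standard normal density. -/
noncomputable def phi (x : ℝ) : ℝ := (Real.sqrt (2 * Real.pi))⁻¹ * Real.exp (-x ^ 2 / 2)

/-- The standard normal cumulative distribution function. -/
noncomputable def Phi (x : ℝ) : ℝ := ∫ t in Set.Iic x, phi t

/-- d(ρ,c,z) = (c + √ρ·z)/√(1−ρ). -/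
noncomputable def dd (ρ c z : ℝ) : ℝ := (c + Real.sqrt ρ * z) / Real.sqrt (1 - ρ)

/-- G(ρ,c,z) = (c + z/√ρ)/(2(1−ρ)^{3/2}). -/
noncomputable def G (ρ c z : ℝ) : ℝ :=
  (c + z / Real.sqrt ρ) / (2 * (1 - ρ) ^ ((3 : ℝ) / 2))

/-- H_n(ρ,c) = ∫ Φ(d(ρ,c,z))^n φ(z) dz. -/
noncomputable def Hn (n : ℕ) (ρ c : ℝ) : ℝ := ∫ z : ℝ, (Phi (dd ρ c z)) ^ n * phi z

/-!
For fixed `z` we have `dd ρ c z = a * c + b` with slope `a = 1 / √(1 - ρ) > 1`. By l'Hôpital's rule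
the Gaussian tail at `a * c + b` is negligible compared with the tail at `c`, which is `α / n`, so
`n * Phi (-(a * c + b)) → 0` and `Phi (dd ρ c z) ^ n = (1 - Phi (-(a * c + b))) ^ n → 1`. By
dominated convergence the family-wise error rate tends to `0`, which lies below `α * (1 - ρ)`.
-/

open Asymptotics ProbabilityTheory
open scoped Topology

theorem hasDerivAt_integral_Iic {E : Type*} [NormedAddCommGroup E] [NormedSpace ℝ E]
    [CompleteSpace E] {f : ℝ → E} (hf : Integrable f) {x : ℝ} (hx : ContinuousAt f x) :
    HasDerivAt (fun u => ∫ t in Set.Iic u, f t) (f x) x := by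
  have hderiv : HasDerivAt (fun u => (∫ t in Set.Iic 0, f t) + ∫ t in (0 : ℝ)..u, f t) (f x) x :=
    (intervalIntegral.integral_hasDerivAt_right hf.intervalIntegrable
      hf.aestronglyMeasurable.stronglyMeasurableAtFilter hx).const_add _
  refine hderiv.congr_of_eventuallyEq (Eventually.of_forall fun u => ?_)
  exact eq_add_of_sub_eq'
    (intervalIntegral.integral_Iic_sub_Iic hf.integrableOn hf.integrableOn)

theorem phi_eq_gaussianPDFReal : phi = gaussianPDFReal 0 1 := by
  ext x
  simp [phi, gaussianPDFReal]

theorem phi_pos (x : ℝ) : 0 < phi x := by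
  unfold phi
  positivity

theorem phi_neg (x : ℝ) : phi (-x) = phi x := by
  simp [phi]

theorem continuous_phi : Continuous phi := by
  unfold phi
  fun_prop

theorem integrable_phi : Integrable phi :=
  phi_eq_gaussianPDFReal ▸ integrable_gaussianPDFReal 0 1

theorem integral_phi : ∫ x, phi x = 1 :=
  phi_eq_gaussianPDFReal ▸ integral_gaussianPDFReal_eq_one 0 one_ne_zero

theorem Phi_eq_cdf : Phi = cdf (gaussianReal 0 1) := by
  ext x
  rw [cdf_eq_real, measureReal_def, gaussianReal_apply_eq_integral 0 one_ne_zero,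
    ENNReal.toReal_ofReal (integral_nonneg (gaussianPDFReal_nonneg 0 1)), Phi,
    phi_eq_gaussianPDFReal]

theorem Phi_nonneg (x : ℝ) : 0 ≤ Phi x :=
  Phi_eq_cdf ▸ cdf_nonneg _ x

theorem Phi_le_one (x : ℝ) : Phi x ≤ 1 :=
  Phi_eq_cdf ▸ cdf_le_one _ x

theorem tendsto_Phi_atBot : Tendsto Phi atBot (𝓝 0) :=
  Phi_eq_cdf ▸ tendsto_cdf_atBot _

theorem hasDerivAt_Phi (x : ℝ) : HasDerivAt Phi (phi x) x :=
  hasDerivAt_integral_Iic integrable_phi continuous_phi.continuousAt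

theorem strictMono_Phi : StrictMono Phi :=
  strictMono_of_hasDerivAt_pos hasDerivAt_Phi phi_pos

theorem Phi_pos (x : ℝ) : 0 < Phi x :=
  (Phi_nonneg (x - 1)).trans_lt (strictMono_Phi (sub_one_lt x))

theorem Phi_eq_one_sub_Phi_neg (x : ℝ) : Phi x = 1 - Phi (-x) := by
  have upper_tail : Phi (-x) = ∫ t in Set.Ioi x, phi t := by
    simpa only [Phi, phi_neg, neg_neg] using integral_comp_neg_Iic (-x) phi
  rw [upper_tail, ← integral_phi,
    ← intervalIntegral.integral_Iic_add_Ioi integrable_phi.integrableOn integrable_phi.integrableOn]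
  exact (add_sub_cancel_right _ _).symm

theorem tendsto_atTop_of_tendsto_Phi_neg {ι : Type*} {l : Filter ι} {c : ι → ℝ}
    (hc : Tendsto (fun i => Phi (-c i)) l (𝓝 0)) : Tendsto c l atTop := by
  refine tendsto_atTop.2 fun M => ?_
  filter_upwards [hc.eventually_lt_const (Phi_pos (-M))] with i hi
  exact (neg_lt_neg_iff.1 (strictMono_Phi.lt_iff_lt.1 hi)).le

theorem isLittleO_phi_affine {a : ℝ} (ha : 1 < a) (b : ℝ) :
    (fun x => phi (a * x + b)) =o[atTop] phi := by
  -- The exponent of the ratio of the densities is `(x ^ 2 - (a * x + b) ^ 2) / 2`, factored here.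
  have exponent : Tendsto (fun x : ℝ => ((1 - a) * x - b) * ((1 + a) * x + b) / 2) atTop atBot := by
    refine Tendsto.atBot_div_const two_pos (Tendsto.atBot_mul_atTop₀ ?_ ?_)
    · exact tendsto_atBot_add_const_right _ _
        (tendsto_id.const_mul_atTop_of_neg (sub_neg.2 ha))
    · exact tendsto_atTop_add_const_right _ _
        (tendsto_id.const_mul_atTop (by linarith))
  refine (isLittleO_iff_tendsto fun x hx => absurd hx (phi_pos x).ne').2
    ((Real.tendsto_exp_atBot.comp exponent).congr fun x => ?_)
  rw [phi, phi, mul_div_mul_left _ _ (by positivity), ← Real.exp_sub]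
  exact congrArg Real.exp (by ring)

theorem isLittleO_Phi_neg_affine {a : ℝ} (ha : 1 < a) (b : ℝ) :
    (fun x => Phi (-(a * x + b))) =o[atTop] fun x => Phi (-x) := by
  have affine_atTop : Tendsto (fun x => a * x + b) atTop atTop :=
    tendsto_atTop_add_const_right _ _ (tendsto_id.const_mul_atTop (by linarith))
  have affine_deriv (x : ℝ) : HasDerivAt (fun x => a * x + b) a x := by
    simpa using ((hasDerivAt_id x).const_mul a).add_const b
  have deriv_ratio :
      Tendsto (fun x => phi (-(a * x + b)) * -a / (phi (-x) * -1)) atTop (𝓝 0) := by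
    have density_ratio := (isLittleO_phi_affine ha b).tendsto_div_nhds_zero.mul_const a
    rw [zero_mul] at density_ratio
    refine density_ratio.congr fun x => ?_
    rw [phi_neg, phi_neg]
    ring
  refine (isLittleO_iff_tendsto fun x hx => absurd hx (Phi_pos _).ne').2 ?_
  exact HasDerivAt.lhopital_zero_atTop
    (Eventually.of_forall fun x => (hasDerivAt_Phi _).comp x (affine_deriv x).neg)
    (Eventually.of_forall fun x => (hasDerivAt_Phi _).comp x (hasDerivAt_neg x))
    (Eventually.of_forall fun x => mul_ne_zero (phi_pos _).ne' (by norm_num))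
    (tendsto_Phi_atBot.comp (tendsto_neg_atTop_atBot.comp affine_atTop))
    (tendsto_Phi_atBot.comp tendsto_neg_atTop_atBot) deriv_ratio

theorem tendsto_Phi_affine_pow {a : ℝ} (ha : 1 < a) (b : ℝ) {c : ℕ → ℝ}
    (hc : (fun n => Phi (-c n)) =O[atTop] fun n : ℕ => (n : ℝ)⁻¹) :
    Tendsto (fun n => Phi (a * c n + b) ^ n) atTop (𝓝 1) := by
  have c_atTop : Tendsto c atTop atTop :=
    tendsto_atTop_of_tendsto_Phi_neg (hc.trans_tendsto tendsto_inv_atTop_nhds_zero_nat)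
  have tail_isLittleO : (fun n => Phi (-(a * c n + b))) =o[atTop] fun n : ℕ => (n : ℝ)⁻¹ :=
    ((isLittleO_Phi_neg_affine ha b).comp_tendsto c_atTop).trans_isBigO hc
  have n_mul_tail : Tendsto (fun n : ℕ => (n : ℝ) * -Phi (-(a * c n + b))) atTop (𝓝 0) := by
    simpa only [div_inv_eq_mul, mul_comm] using tail_isLittleO.neg_left.tendsto_div_nhds_zero
  simpa only [Phi_eq_one_sub_Phi_neg (a * c _ + b), sub_eq_add_neg, Real.exp_zero] using
    Real.tendsto_one_add_pow_exp_of_tendsto n_mul_tail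

theorem dd_eq_affine (ρ c z : ℝ) : dd ρ c z = (√(1 - ρ))⁻¹ * c + √ρ * z / √(1 - ρ) := by
  rw [dd, add_div, div_eq_inv_mul]

theorem tendsto_Phi_dd_pow {ρ : ℝ} (hρ : ρ ∈ Set.Ioo 0 1) (z : ℝ) {c : ℕ → ℝ}
    (hc : (fun n => Phi (-c n)) =O[atTop] fun n : ℕ => (n : ℝ)⁻¹) :
    Tendsto (fun n => Phi (dd ρ (c n) z) ^ n) atTop (𝓝 1) := by
  have slope_gt_one : 1 < (√(1 - ρ))⁻¹ :=
    (one_lt_inv₀ (Real.sqrt_pos.2 (sub_pos.2 hρ.2))).2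
      ((Real.sqrt_lt' one_pos).2 (by linarith [hρ.1]))
  simpa only [dd_eq_affine] using tendsto_Phi_affine_pow slope_gt_one _ hc

theorem tendsto_Hn_of_tendsto_Phi_dd_pow {ι : Type*} {l : Filter ι} [l.IsCountablyGenerated]
    {n : ι → ℕ} {ρ c : ι → ℝ}
    (h : ∀ z, Tendsto (fun i => Phi (dd (ρ i) (c i) z) ^ n i) l (𝓝 1)) :
    Tendsto (fun i => Hn (n i) (ρ i) (c i)) l (𝓝 1) := by
  rw [← integral_phi]
  refine tendsto_integral_filter_of_dominated_convergence phi
    (Eventually.of_forall fun i => ?_)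
    (Eventually.of_forall fun i => Eventually.of_forall fun z => ?_) integrable_phi
    (Eventually.of_forall fun z => ?_)
  · have dd_measurable : Measurable (dd (ρ i) (c i)) := by
      unfold dd
      fun_prop
    exact (((strictMono_Phi.monotone.measurable.comp dd_measurable).pow_const (n i)).mul
      continuous_phi.measurable).aestronglyMeasurable
  · rw [Real.norm_of_nonneg (mul_nonneg (pow_nonneg (Phi_nonneg _) _) (phi_pos z).le)]
    exact mul_le_of_le_one_left (phi_pos z).le (pow_le_one₀ (Phi_nonneg _) (Phi_le_one _))
  · simpa using (h z).mul_const (phi z)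

theorem limsup_FWER_bonferroni_le_general {ρ : ℝ} (hρ : ρ ∈ Set.Ioo 0 1) {α : ℝ} {c : ℕ → ℝ}
    (hc : ∀ᶠ n : ℕ in atTop, Phi (-c n) ≤ α / n) :
    Tendsto (fun n => 1 - Hn n ρ (c n)) atTop (𝓝 0) := by
  have tail_isBigO : (fun n => Phi (-c n)) =O[atTop] fun n : ℕ => (n : ℝ)⁻¹ := by
    refine IsBigO.of_bound α (hc.mono fun n hn => ?_)
    rwa [Real.norm_of_nonneg (Phi_nonneg _), Real.norm_of_nonneg (by positivity), ← div_eq_mul_inv]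
  simpa using (tendsto_Hn_of_tendsto_Phi_dd_pow
    fun z => tendsto_Phi_dd_pow hρ z tail_isBigO).const_sub 1

theorem limsup_FWER_bonferroni_le
    (ρ : ℝ) (hρ : ρ ∈ Set.Ioo (0:ℝ) 1) (α : ℝ) (hα : α ∈ Set.Ioo (0:ℝ) 1)
    (c : ℕ → ℝ) (hc : ∀ n : ℕ, 1 ≤ n → Phi (-(c n)) = α / n) :
    limsup (fun n : ℕ => 1 - Hn n ρ (c n)) atTop ≤ α * (1 - ρ) := by
  rw [(limsup_FWER_bonferroni_le_general hρ ((eventually_ge_atTop 1).mono fun n hn =>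
    (hc n hn).le)).limsup_eq]
  exact mul_nonneg hα.1.le (sub_nonneg.2 hρ.2.le)
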